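/- For each integer k ≥ 1, as an identity of formal power series (or for |q|<1 and suitable a,b,z): Σ_{λ: l(λ) ≤ k} z^{|λ|} q^{2n(λ)} (a;q^{-1})_{λ_1} (b;q^{-1})_{λ_1} / ((-q;q)_{λ_k} (q;q)_λ) = ((-z/q;q)_∞ / (abz;q)_∞) Σ_{r ≥ 0} (-1)^r z^{kr} q^{r + (2k+2)binom(r,2)} (a;q^{-1})_r (b;q^{-1})_r (azq^r;q)_∞ (bzq^r;q)_∞ (1 - zq^{2r-1}) / ((q^2;q^2)_r (z^2 q^{2r-2};q^2)_∞). -/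

import Mathlib

/-- Finite q-Pochhammer symbol `(x;q)_n = ∏_{k=0}^{n-1} (1 - x q^k)`. -/
noncomputable def qPoch (x q : ℂ) (n : ℕ) : ℂ := ∏ k ∈ Finset.range n, (1 - x * q ^ k)

/-- Infinite q-Pochhammer symbol `(x;q)_∞ = ∏_{k≥0} (1 - x q^k)`. -/
noncomputable def qPochInf (x q : ℂ) : ℂ := ∏' k : ℕ, (1 - x * q ^ k)

/-- Partitions with at most `k` (positive) parts: antitone sequences of naturals vanishing
from index `k` on; `l 0` is the largest part `λ_1`, and `l (k-1)` is `λ_k`. -/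
def PartK (k : ℕ) : Type := {l : ℕ → ℕ // Antitone l ∧ ∀ i, k ≤ i → l i = 0}

/-- `|λ| = Σ_i λ_i`. -/
def wtK (k : ℕ) (l : PartK k) : ℕ := ∑ i ∈ Finset.range k, l.1 i

/-- `n_2(λ) = Σ_i λ_i^2`. -/
def n2K (k : ℕ) (l : PartK k) : ℕ := ∑ i ∈ Finset.range k, (l.1 i) ^ 2

/-- `n(λ) = Σ_i binom(λ_i, 2)`. -/
def nK (k : ℕ) (l : PartK k) : ℕ := ∑ i ∈ Finset.range k, Nat.choose (l.1 i) 2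

/-- `(x;q)_λ = ∏_{i=1}^{k} (x;q)_{λ_i - λ_{i+1}}` (with `λ_{k+1} = 0`). -/
noncomputable def pochK (x q : ℂ) (k : ℕ) (l : PartK k) : ℂ :=
  ∏ i ∈ Finset.range k, qPoch x q (l.1 i - l.1 (i + 1))


open Filter Topology

lemma qPoch_zero' (x q : ℂ) : qPoch x q 0 = 1 := by simp [qPoch]

lemma qPoch_succ (x q : ℂ) (n : ℕ) : qPoch x q (n + 1) = qPoch x q n * (1 - x * q ^ n) := by
  simp [qPoch, Finset.prod_range_succ]

lemma qPoch_add (x q : ℂ) (m n : ℕ) :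
    qPoch x q (m + n) = qPoch x q m * qPoch (x * q ^ m) q n := by
  simp only [qPoch, Finset.prod_range_add]
  congr 1
  refine Finset.prod_congr rfl fun i _ => ?_
  rw [pow_add]; ring

lemma qPoch_zero_left (q : ℂ) (n : ℕ) : qPoch 0 q n = 1 := by simp [qPoch]

lemma qPoch_ne_zero {x q : ℂ} (h : ∀ n : ℕ, 1 - x * q ^ n ≠ 0) (n : ℕ) : qPoch x q n ≠ 0 :=
  Finset.prod_ne_zero_iff.2 fun i _ => h i

lemma summable_xq {q : ℂ} (hq : ‖q‖ < 1) (x : ℂ) : Summable fun k : ℕ => ‖-(x * q ^ k)‖ := by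
  simp only [norm_neg, norm_mul, norm_pow]
  exact (summable_geometric_of_lt_one (norm_nonneg _) hq).mul_left _

lemma qPoch_tendsto {q : ℂ} (hq : ‖q‖ < 1) (x : ℂ) :
    Tendsto (qPoch x q) atTop (𝓝 (qPochInf x q)) := by
  have h := (multipliable_one_add_of_summable (summable_xq hq x)).hasProd.tendsto_prod_nat
  simp only [← sub_eq_add_neg] at h
  exact h

lemma qPochInf_ne_zero {q : ℂ} (hq : ‖q‖ < 1) {x : ℂ} (h : ∀ n : ℕ, 1 - x * q ^ n ≠ 0) :
    qPochInf x q ≠ 0 := by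
  have := tprod_one_add_ne_zero_of_summable (f := fun k : ℕ => -(x * q ^ k))
    (by intro i; simpa only [← sub_eq_add_neg] using h i) (summable_xq hq x)
  simp only [← sub_eq_add_neg] at this
  exact this

lemma qPochInf_split {q : ℂ} (hq : ‖q‖ < 1) (x : ℂ) (m : ℕ) :
    qPochInf x q = qPoch x q m * qPochInf (x * q ^ m) q := by
  have h1 := (qPoch_tendsto hq x).comp (tendsto_add_atTop_nat m)
  have h2 := (qPoch_tendsto hq (x * q ^ m)).const_mul (qPoch x q m)
  refine tendsto_nhds_unique h1 (h2.congr fun n => ?_)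
  simp [← qPoch_add, add_comm]

lemma qPochInf_sq {q : ℂ} (hq : ‖q‖ < 1) (x : ℂ) :
    qPochInf (x ^ 2) (q ^ 2) = qPochInf x q * qPochInf (-x) q := by
  have hq2 : ‖q ^ 2‖ < 1 := by
    rw [norm_pow]; exact pow_lt_one₀ (norm_nonneg _) hq (by norm_num)
  refine tendsto_nhds_unique (qPoch_tendsto hq2 (x ^ 2))
    (((qPoch_tendsto hq x).mul (qPoch_tendsto hq (-x))).congr fun n => ?_)
  simp only [qPoch, ← Finset.prod_mul_distrib]
  refine Finset.prod_congr rfl fun i _ => ?_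
  ring

lemma qPoch_bdd {q : ℂ} (hq : ‖q‖ < 1) (x : ℂ) : ∃ K : ℝ, ∀ n, ‖qPoch x q n‖ ≤ K := by
  obtain ⟨K, hK⟩ := (Metric.isBounded_range_of_tendsto _ (qPoch_tendsto hq x)).exists_norm_le
  exact ⟨K, fun n => hK _ ⟨n, rfl⟩⟩

lemma qPoch_inv_bdd {q : ℂ} (hq : ‖q‖ < 1) {x : ℂ} (h : ∀ n : ℕ, 1 - x * q ^ n ≠ 0) :
    ∃ K : ℝ, ∀ n, ‖(qPoch x q n)⁻¹‖ ≤ K := by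
  obtain ⟨K, hK⟩ := (Metric.isBounded_range_of_tendsto _
    ((qPoch_tendsto hq x).inv₀ (qPochInf_ne_zero hq h))).exists_norm_le
  exact ⟨K, fun n => hK _ ⟨n, rfl⟩⟩

lemma one_sub_q_ne {q : ℂ} (hq : ‖q‖ < 1) (n : ℕ) : 1 - q * q ^ n ≠ 0 := by
  rw [← pow_succ', sub_ne_zero]
  intro h
  have : ‖q ^ (n + 1)‖ < 1 := by
    rw [norm_pow]; exact pow_lt_one₀ (norm_nonneg _) hq (by simp)
  rw [← h] at this
  simp at this

/-- The weight. -/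
noncomputable def Wt (q z a b : ℂ) (n : ℕ) : ℂ :=
  z ^ n * q ^ (2 * Nat.choose n 2) * qPoch a q⁻¹ n * qPoch b q⁻¹ n

lemma two_choose_succ (n : ℕ) : 2 * Nat.choose (n + 1) 2 = 2 * Nat.choose n 2 + 2 * n := by
  rw [Nat.choose_succ_succ' n 1]; simp; ring

lemma Wt_zero (q z a b : ℂ) : Wt q z a b 0 = 1 := by simp [Wt, qPoch]

lemma Wt_succ {q : ℂ} (hq0 : q ≠ 0) (z a b : ℂ) (n : ℕ) :
    Wt q z a b (n + 1) = Wt q z a b n * (z * (q ^ n - a) * (q ^ n - b)) := by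
  have h : q ^ n * (q⁻¹) ^ n = 1 := by rw [← mul_pow, mul_inv_cancel₀ hq0, one_pow]
  simp only [Wt, two_choose_succ, qPoch_succ, pow_add, pow_one, pow_mul' q 2 n]
  have e1 : q ^ n - a = q ^ n * (1 - a * q⁻¹ ^ n) := by linear_combination a * h
  have e2 : q ^ n - b = q ^ n * (1 - b * q⁻¹ ^ n) := by linear_combination b * h
  rw [e1, e2]; ring

lemma Wt_add {q : ℂ} (hq0 : q ≠ 0) (z a b : ℂ) (r t : ℕ) :
    Wt q z a b (r + t) = Wt q z a b r * Wt q (z * q ^ (2 * r)) (a * q⁻¹ ^ r) (b * q⁻¹ ^ r) t := by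
  induction t with
  | zero => simp [Wt_zero]
  | succ t ih =>
    have h : q ^ r * (q⁻¹) ^ r = 1 := by rw [← mul_pow, mul_inv_cancel₀ hq0, one_pow]
    rw [← add_assoc, Wt_succ hq0, ih, Wt_succ hq0]
    have e : ∀ x : ℂ, q ^ r * (q ^ t - x * q⁻¹ ^ r) = q ^ (r + t) - x := fun x => by
      rw [pow_add]; linear_combination (-x) * h
    rw [← e a, ← e b]; ring

lemma Wt_summable {q z a b : ℂ} (hq : ‖q‖ < 1) (hq0 : q ≠ 0) (h : ‖a * b * z‖ < 1) :
    Summable fun n => ‖Wt q z a b n‖ := by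
  obtain ⟨ρ, h1, h2⟩ := exists_between h
  have ht : Tendsto (fun n : ℕ => ‖z * (q ^ n - a) * (q ^ n - b)‖) atTop (𝓝 ‖a * b * z‖) := by
    have hp := tendsto_pow_atTop_nhds_zero_of_norm_lt_one hq
    have := (((hp.sub_const a).const_mul z).mul (hp.sub_const b)).norm
    convert this using 2
    congr 1; ring
  refine summable_of_ratio_norm_eventually_le (r := ρ) h2 ?_
  filter_upwards [ht.eventually (gt_mem_nhds h1)] with n hn
  rw [Wt_succ hq0, norm_norm, norm_norm, norm_mul, mul_comm]
  exact mul_le_mul_of_nonneg_right hn.le (norm_nonneg _)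

/-- The q-Gauss terms. -/
noncomputable def Tt (q C a b : ℂ) (t : ℕ) : ℂ := Wt q C a b t / (qPoch q q t * qPoch C q t)

lemma bdd_mul_summable {ι : Type*} {f g : ι → ℂ} (hf : Summable fun i => ‖f i‖) {K : ℝ}
    (hg : ∀ i, ‖g i‖ ≤ K) : Summable fun i => ‖f i * g i‖ := by
  refine Summable.of_nonneg_of_le (fun i => norm_nonneg _) (fun i => ?_) (hf.mul_right K)
  rw [norm_mul]
  exact mul_le_mul_of_nonneg_left (hg i) (norm_nonneg _)

lemma Tt_summable {q C a b : ℂ} (hq : ‖q‖ < 1) (hq0 : q ≠ 0) (h : ‖a * b * C‖ < 1)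
    (hC : ∀ n : ℕ, 1 - C * q ^ n ≠ 0) : Summable fun n => ‖Tt q C a b n‖ := by
  obtain ⟨K1, h1⟩ := qPoch_inv_bdd hq (one_sub_q_ne hq)
  obtain ⟨K2, h2⟩ := qPoch_inv_bdd hq hC
  have := bdd_mul_summable (bdd_mul_summable (Wt_summable hq hq0 h) h1) h2
  refine this.congr fun n => ?_
  rw [Tt]; congr 1; rw [div_eq_mul_inv, mul_inv]; ring

lemma Tt_succ {q C a b : ℂ} (hq : ‖q‖ < 1) (hq0 : q ≠ 0)
    (hC : ∀ n : ℕ, 1 - C * q ^ n ≠ 0) (t : ℕ) :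
    (1 - q * q ^ t) * (1 - C * q ^ t) * Tt q C a b (t + 1)
      = Tt q C a b t * (C * (q ^ t - a) * (q ^ t - b)) := by
  have h1 := one_sub_q_ne hq t
  have h2 := hC t
  have h3 := qPoch_ne_zero (one_sub_q_ne hq) t
  have h4 := qPoch_ne_zero hC t
  simp only [Tt, Wt_succ hq0, qPoch_succ]
  generalize 1 - q * q ^ t = u at *
  generalize 1 - C * q ^ t = v at *
  field_simp

lemma Wt_mul (q C a b s : ℂ) (t : ℕ) : Wt q (C * s) a b t = Wt q C a b t * s ^ t := by
  simp only [Wt, mul_pow]; ring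

lemma Tt_shift {q C a b : ℂ} (hq : ‖q‖ < 1) (hC : ∀ n : ℕ, 1 - C * q ^ n ≠ 0) (m t : ℕ) :
    Tt q (C * q ^ m) a b t
      = Tt q C a b t * (q ^ m) ^ t * (qPoch C q t * qPoch C q m * (qPoch C q (m + t))⁻¹) := by
  have h3 := qPoch_ne_zero (one_sub_q_ne hq) t
  have h4 := qPoch_ne_zero hC t
  have h5 := qPoch_ne_zero hC m
  have h6 := qPoch_ne_zero hC (m + t)
  rw [qPoch_add] at h6
  have h7 := right_ne_zero_of_mul h6
  simp only [Tt, Wt_mul, qPoch_add]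
  field_simp

lemma shift_ne {q C : ℂ} (hC : ∀ n : ℕ, 1 - C * q ^ n ≠ 0) (m : ℕ) :
    ∀ n : ℕ, 1 - C * q ^ m * q ^ n ≠ 0 := fun n => by
  have := hC (m + n)
  rwa [pow_add, ← mul_assoc] at this

lemma shift_norm {q x : ℂ} (hq : ‖q‖ < 1) (h : ‖x‖ < 1) (m : ℕ) : ‖x * q ^ m‖ < 1 := by
  rw [norm_mul, norm_pow]
  calc ‖x‖ * ‖q‖ ^ m ≤ ‖x‖ * 1 :=
        mul_le_mul_of_nonneg_left (pow_le_one₀ (norm_nonneg _) hq.le) (norm_nonneg _)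
    _ < 1 := by simpa using h

lemma gauss_step {q C a b : ℂ} (hq : ‖q‖ < 1) (hq0 : q ≠ 0) (h : ‖a * b * C‖ < 1)
    (hC : ∀ n : ℕ, 1 - C * q ^ n ≠ 0) :
    (1 - C) * (1 - C * a * b) * ∑' t, Tt q C a b t
      = (1 - C * a) * (1 - C * b) * ∑' t, Tt q (C * q) a b t := by
  have hs1 := (Tt_summable hq hq0 h hC).of_norm
  have hC1 : ∀ n : ℕ, 1 - C * q * q ^ n ≠ 0 := by simpa using shift_ne hC 1
  have h' : ‖a * b * (C * q)‖ < 1 := by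
    have := shift_norm hq h 1
    rwa [pow_one, mul_assoc (a * b)] at this
  have hs2 := (Tt_summable hq hq0 h' hC1).of_norm
  have hU : HasSum (fun t => (1 - C) * (1 - C * a * b) * Tt q C a b t
      - (1 - C * a) * (1 - C * b) * Tt q (C * q) a b t) 0 := by
    have hs := (hs1.mul_left ((1 - C) * (1 - C * a * b))).sub
      (hs2.mul_left ((1 - C * a) * (1 - C * b)))
    rw [hs.hasSum_iff_tendsto_nat]
    have key : ∀ n, ∑ t ∈ Finset.range n, ((1 - C) * (1 - C * a * b) * Tt q C a b t
      - (1 - C * a) * (1 - C * b) * Tt q (C * q) a b t) = -(1 - C) * (1 - q ^ n) * Tt q C a b n := by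
      intro n
      induction n with
      | zero => simp
      | succ n ih =>
        rw [Finset.sum_range_succ, ih]
        have e1 := Tt_succ (a := a) (b := b) hq hq0 hC n
        have e2 : (1 - C * q ^ n) * Tt q (C * q) a b n = Tt q C a b n * q ^ n * (1 - C) := by
          have hh := Tt_shift (a := a) (b := b) hq hC 1 n
          rw [pow_one] at hh
          rw [hh, add_comm 1 n, qPoch_succ, qPoch_succ, qPoch_zero']
          have h2 := hC n
          have h4 := qPoch_ne_zero hC n
          field_simp
        have h2 := hC n
        apply mul_left_cancel₀ h2
        rw [pow_succ']
        linear_combination (1 - C) * e1 - (1 - C * a) * (1 - C * b) * e2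
    simp only [key]
    have hp := tendsto_pow_atTop_nhds_zero_of_norm_lt_one hq
    have := ((hp.const_sub 1).const_mul (-(1 - C))).mul hs1.tendsto_atTop_zero
    simpa using this
  have := (((hs1.hasSum.mul_left ((1 - C) * (1 - C * a * b))).sub
      (hs2.hasSum.mul_left ((1 - C * a) * (1 - C * b)))).unique hU)
  exact sub_eq_zero.1 this

lemma gauss_iter {q C a b : ℂ} (hq : ‖q‖ < 1) (hq0 : q ≠ 0) (h : ‖a * b * C‖ < 1)
    (hC : ∀ n : ℕ, 1 - C * q ^ n ≠ 0) (m : ℕ) :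
    qPoch C q m * qPoch (C * a * b) q m * ∑' t, Tt q C a b t
      = qPoch (C * a) q m * qPoch (C * b) q m * ∑' t, Tt q (C * q ^ m) a b t := by
  induction m with
  | zero => simp [qPoch_zero']
  | succ m ih =>
    have h' : ‖a * b * (C * q ^ m)‖ < 1 := by
      have := shift_norm hq h m
      rwa [mul_assoc (a * b)] at this
    have hst := gauss_step hq hq0 h' (shift_ne hC m)
    simp only [qPoch_succ]
    rw [pow_succ, ← mul_assoc C]
    linear_combination (1 - C * q ^ m) * (1 - C * a * b * q ^ m) * ih
      + qPoch (C * a) q m * qPoch (C * b) q m * hst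

lemma gauss_lim {q C a b : ℂ} (hq : ‖q‖ < 1) (hq0 : q ≠ 0) (h : ‖a * b * C‖ < 1)
    (hC : ∀ n : ℕ, 1 - C * q ^ n ≠ 0) :
    Tendsto (fun m : ℕ => ∑' t, Tt q (C * q ^ m) a b t) atTop (𝓝 1) := by
  obtain ⟨K1, h1⟩ := qPoch_bdd hq C
  obtain ⟨K2, h2⟩ := qPoch_inv_bdd hq hC
  have K10 : 0 ≤ K1 := (norm_nonneg _).trans (h1 0)
  have K20 : 0 ≤ K2 := (norm_nonneg _).trans (h2 0)
  have hs := Tt_summable hq hq0 h hC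
  have hone : (1 : ℂ) = ∑' t : ℕ, (if t = 0 then 1 else 0) := by simp
  rw [hone]
  refine tendsto_tsum_of_dominated_convergence (bound := fun t => ‖Tt q C a b t‖ * (K1 * K1 * K2))
    (hs.mul_right _) ?_ ?_
  · intro t
    rcases Nat.eq_zero_or_pos t with rfl | ht
    · simp [Tt, Wt_zero, qPoch_zero']
    · rw [if_neg ht.ne']
      refine squeeze_zero_norm (a := fun m => ‖Tt q C a b t‖ * (K1 * K1 * K2) * ‖q‖ ^ m) ?_ ?_
      · intro m
        rw [Tt_shift hq hC, norm_mul, norm_mul, norm_mul, norm_mul, norm_pow, norm_pow]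
        have : (‖q‖ ^ m) ^ t ≤ ‖q‖ ^ m :=
          pow_le_of_le_one (by positivity) (pow_le_one₀ (norm_nonneg _) hq.le) ht.ne'
        calc _ ≤ ‖Tt q C a b t‖ * ‖q‖ ^ m * (K1 * K1 * K2) := by
              gcongr
              · exact h1 _
              · exact h1 _
              · exact h2 _
          _ = _ := by ring
      · have := (tendsto_pow_atTop_nhds_zero_of_lt_one (norm_nonneg q) hq).const_mul
          (‖Tt q C a b t‖ * (K1 * K1 * K2))
        simpa using this
  · refine Eventually.of_forall fun m t => ?_
    rw [Tt_shift hq hC, norm_mul, norm_mul, norm_mul, norm_mul, norm_pow, norm_pow]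
    have : (‖q‖ ^ m) ^ t ≤ 1 := pow_le_one₀ (by positivity) (pow_le_one₀ (norm_nonneg _) hq.le)
    calc _ ≤ ‖Tt q C a b t‖ * 1 * (K1 * K1 * K2) := by
          gcongr
          · exact h1 _
          · exact h1 _
          · exact h2 _
      _ = _ := by ring

/-- q-Gauss summation. -/
lemma gauss_sum {q C a b : ℂ} (hq : ‖q‖ < 1) (hq0 : q ≠ 0) (h : ‖a * b * C‖ < 1)
    (hC : ∀ n : ℕ, 1 - C * q ^ n ≠ 0) :
    qPochInf C q * qPochInf (C * a * b) q * ∑' t, Tt q C a b t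
      = qPochInf (C * a) q * qPochInf (C * b) q := by
  have l1 := ((qPoch_tendsto hq C).mul (qPoch_tendsto hq (C * a * b))).mul_const
    (∑' t, Tt q C a b t)
  have l2 := ((qPoch_tendsto hq (C * a)).mul (qPoch_tendsto hq (C * b))).mul
    (gauss_lim hq hq0 h hC)
  rw [mul_one] at l2
  exact tendsto_nhds_unique l1 (l2.congr fun m => (gauss_iter hq hq0 h hC m).symm)

/-- finite q-Vandermonde. -/
lemma vand {q C : ℂ} (hq : ‖q‖ < 1) (hq0 : q ≠ 0) (hC : ∀ n : ℕ, 1 - C * q ^ n ≠ 0) (N : ℕ) :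
    ∑ p ∈ Finset.HasAntidiagonal.antidiagonal N, Wt q C 0 0 p.1 / (qPoch q q p.2 * qPoch q q p.1 * qPoch C q p.1)
      = 1 / (qPoch q q N * qPoch C q N) := by
  have hN : ∀ t, t ≤ N → qPoch (q ^ N) q⁻¹ t * qPoch q q (N - t) = qPoch q q N := by
    intro t ht
    induction t with
    | zero => simp [qPoch_zero']
    | succ t ih =>
      rw [← ih (by omega)]
      have : N - t = (N - (t + 1)) + 1 := by omega
      rw [this, qPoch_succ, qPoch_succ, ← pow_succ']
      have : q ^ N * q⁻¹ ^ t = q ^ (N - (t + 1) + 1) := by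
        obtain ⟨M, rfl⟩ : ∃ M, N = (M + 1) + t := ⟨N - (t + 1), by omega⟩
        rw [pow_add, mul_assoc, ← mul_pow, mul_inv_cancel₀ hq0]
        rw [show M + 1 + t - (t + 1) = M by omega]
        simp
      rw [this]; ring
  have hN0 : ∀ t, N < t → qPoch (q ^ N) q⁻¹ t = 0 := by
    intro t ht
    refine Finset.prod_eq_zero (Finset.mem_range.2 ht) ?_
    rw [← mul_pow, mul_inv_cancel₀ hq0]; simp
  have hg := gauss_sum (a := q ^ N) (b := 0) hq hq0 (by simp) hC
  have hz : qPochInf 0 q = 1 := by simp [qPochInf]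
  simp only [mul_zero, hz, mul_one] at hg
  have hi := qPochInf_ne_zero hq hC
  rw [qPochInf_split hq C N] at hg hi
  have hgs : qPoch C q N * ∑' t, Tt q C (q ^ N) 0 t = 1 := by
    apply mul_left_cancel₀ (right_ne_zero_of_mul hi)
    linear_combination hg
  rw [tsum_eq_sum (s := Finset.range (N + 1)) (by
    intro t ht
    have : N < t := by simpa using ht
    simp [Tt, Wt, hN0 t this])] at hgs
  have hn := qPoch_ne_zero hC N
  have hqN := qPoch_ne_zero (one_sub_q_ne hq) N
  rw [Finset.Nat.sum_antidiagonal_eq_sum_range_succ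
    (fun i j => Wt q C 0 0 i / (qPoch q q j * qPoch q q i * qPoch C q i)), eq_div_iff (by positivity)]
  rw [← hgs, Finset.sum_mul, Finset.mul_sum]
  refine Finset.sum_congr rfl fun t ht => ?_
  have ht' : t ≤ N := by simpa [Nat.lt_succ_iff] using ht
  have h3 := qPoch_ne_zero (one_sub_q_ne hq) (N - t)
  rw [← hN t ht']
  simp only [Tt, Wt, qPoch_zero_left]
  have h4 := qPoch_ne_zero (one_sub_q_ne hq) t
  have h5 := qPoch_ne_zero hC t
  field_simp

lemma tsum_antidiag {f : ℕ × ℕ → ℂ} (hf : Summable f) :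
    ∑' s, ∑' t, f (s, t) = ∑' N, ∑ p ∈ Finset.HasAntidiagonal.antidiagonal N, f p := by
  rw [← hf.tsum_prod]
  rw [← Finset.HasAntidiagonal.sigmaAntidiagonalEquivProd.tsum_eq f]
  refine (((Finset.HasAntidiagonal.sigmaAntidiagonalEquivProd (A := ℕ)).summable_iff.2
    hf).tsum_sigma' (fun n => (hasSum_fintype _).summable)).trans ?_
  refine tsum_congr fun n => ?_
  rw [tsum_fintype, ← Finset.sum_coe_sort (Finset.HasAntidiagonal.antidiagonal n) f]
  rfl

/-- The unnormalised Bailey sequence without its linear factor. -/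
noncomputable def al0 (q A : ℂ) (r : ℕ) : ℂ :=
  (-1) ^ r * q ^ (r + 2 * Nat.choose r 2) * qPoch (A ^ 2) (q ^ 2) r / qPoch (q ^ 2) (q ^ 2) r

/-- The unnormalised Bailey sequence. -/
noncomputable def al (q A : ℂ) (r : ℕ) : ℂ := al0 q A r * (1 - A * q ^ (2 * r))

lemma norm_sq_lt {q : ℂ} (hq : ‖q‖ < 1) : ‖q ^ 2‖ < 1 := by
  rw [norm_pow]; exact pow_lt_one₀ (norm_nonneg _) hq (by norm_num)

lemma al0_succ {q A : ℂ} (hq : ‖q‖ < 1) (r : ℕ) :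
    al0 q A (r + 1) * (1 - q ^ 2 * (q ^ 2) ^ r)
      = - al0 q A r * (q * (q ^ r) ^ 2) * (1 - A ^ 2 * (q ^ r) ^ 2) := by
  have h1 := one_sub_q_ne (norm_sq_lt hq) r
  have h2 := qPoch_ne_zero (one_sub_q_ne (norm_sq_lt hq)) r
  simp only [al0, two_choose_succ, qPoch_succ]
  have e : q ^ (r + 1 + (2 * Nat.choose r 2 + 2 * r))
      = q ^ (r + 2 * Nat.choose r 2) * (q * (q ^ r) ^ 2) := by ring
  have e2 : (q ^ r) ^ 2 = (q ^ 2) ^ r := by ring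
  rw [e, e2]
  generalize 1 - q ^ 2 * (q ^ 2) ^ r = u at *
  field_simp
  ring

lemma base_partial {q A : ℂ} (hq : ‖q‖ < 1) (hA : ∀ n : ℕ, 1 - A * q ^ n ≠ 0) (n m : ℕ)
    (hm : m ≤ n + 1) :
    ∑ r ∈ Finset.range m, (al q A r / (qPoch q q (n + 1 - r) * qPoch A q (n + 1 + r + 1))
        * (1 - q ^ 2 * (q ^ 2) ^ n) - al q A r / (qPoch q q (n - r) * qPoch A q (n + r + 1)))
      = - (q ^ (n + 1 - m)) * al0 q A m * (1 - (q ^ 2) ^ m)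
          / (qPoch q q (n + 1 - m) * qPoch A q (n + m + 1)) := by
  induction m with
  | zero => simp
  | succ m ih =>
    rw [Finset.sum_range_succ, ih (by omega)]
    obtain ⟨j, rfl⟩ : ∃ j, n = m + j := ⟨n - m, by omega⟩
    rw [show m + j + 1 - m = j + 1 by omega, show m + j - m = j by omega,
      show m + j + 1 - (m + 1) = j by omega, show m + j + 1 + m + 1 = (m + j + m + 1) + 1 by ring,
      show m + j + (m + 1) + 1 = (m + j + m + 1) + 1 by ring, qPoch_succ A q (m + j + m + 1),
      qPoch_succ q q j]
    have h1 := one_sub_q_ne hq j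
    have h2 := qPoch_ne_zero (one_sub_q_ne hq) j
    have h3 := hA (m + j + m + 1)
    have h4 := qPoch_ne_zero hA (m + j + m + 1)
    have e : (1 - (q ^ 2) ^ (m + 1)) = 1 - q ^ 2 * (q ^ 2) ^ m := by ring
    have e0 := al0_succ (A := A) hq m
    rw [e]
    have e1 : - q ^ j * al0 q A (m + 1) * (1 - q ^ 2 * (q ^ 2) ^ m)
      = q ^ j * al0 q A m * (q * (q ^ m) ^ 2) * (1 - A ^ 2 * (q ^ m) ^ 2) := by
      linear_combination (- q ^ j) * e0
    rw [e1]
    simp only [al]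
    have p1 : (q ^ 2) ^ (m + j) = (q ^ m) ^ 2 * (q ^ j) ^ 2 := by ring
    have p2 : q ^ (m + j + m + 1) = (q ^ m) ^ 2 * (q ^ j) * q := by ring
    have p3 : q ^ (2 * m) = (q ^ m) ^ 2 := by ring
    have p4 : (q ^ 2) ^ m = (q ^ m) ^ 2 := by ring
    have p5 : q ^ (j + 1) = q * q ^ j := by ring
    rw [p1, p2, p3, p4, p5]
    rw [p2] at h3
    generalize al0 q A m = α
    generalize qPoch A q (m + j + m + 1) = Q at *
    generalize qPoch q q j = P at *
    generalize q ^ m = x at *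
    generalize q ^ j = y at *
    have key : ∀ (u v : ℂ), u ≠ 0 → v ≠ 0 → u = 1 - q * y → v = 1 - A * (x ^ 2 * y * q) →
      -(q * y) * α * (1 - x ^ 2) / (P * u * Q) +
        (α * (1 - A * x ^ 2) / (P * u * (Q * v)) * (1 - q ^ 2 * (x ^ 2 * y ^ 2))
          - α * (1 - A * x ^ 2) / (P * Q))
      = y * α * (q * x ^ 2) * (1 - A ^ 2 * x ^ 2) / (P * (Q * v)) := by
      intro u v hu hv eu ev
      field_simp
      rw [eu, ev]
      ring
    exact key _ _ h1 h3 rfl rfl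

lemma base_pair {q A : ℂ} (hq : ‖q‖ < 1) (hA : ∀ n : ℕ, 1 - A * q ^ n ≠ 0) (n : ℕ) :
    ∑ r ∈ Finset.range (n + 1), al q A r / (qPoch q q (n - r) * qPoch A q (n + r + 1))
      = 1 / qPoch (q ^ 2) (q ^ 2) n := by
  induction n with
  | zero =>
    have h := hA 0
    simp [al, al0, qPoch_zero', qPoch_succ] at h ⊢
    field_simp
    exact h
  | succ n ih =>
    have h1 := one_sub_q_ne (norm_sq_lt hq) n
    have h2 := qPoch_ne_zero (one_sub_q_ne (norm_sq_lt hq)) n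
    have hp := base_partial hq hA n (n + 1) le_rfl
    rw [Finset.sum_sub_distrib, ih, ← Finset.sum_mul] at hp
    rw [Finset.sum_range_succ]
    apply mul_right_cancel₀ h1
    rw [add_mul, sub_eq_iff_eq_add.1 hp]
    rw [show n + 1 + (n + 1) + 1 = (n + (n + 1) + 1) + 1 by ring, qPoch_succ A q (n + (n + 1) + 1),
      qPoch_succ (q ^ 2)]
    have h3 := hA (n + (n + 1) + 1)
    have h4 := qPoch_ne_zero hA (n + (n + 1) + 1)
    simp only [al, Nat.sub_self, qPoch_zero', pow_zero]
    have p1 : q ^ (2 * (n + 1)) = q ^ (n + (n + 1) + 1) := by ring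
    have p2 : (q ^ 2) ^ (n + 1) = q ^ 2 * (q ^ 2) ^ n := by ring
    rw [p1, p2]
    generalize 1 - A * q ^ (n + (n + 1) + 1) = u at *
    generalize 1 - q ^ 2 * (q ^ 2) ^ n = v at *
    field_simp
    ring

lemma base_pair' {q A : ℂ} (hq : ‖q‖ < 1) (hA : ∀ n : ℕ, 1 - A * q ^ n ≠ 0) (N : ℕ) :
    ∑ p ∈ Finset.HasAntidiagonal.antidiagonal N,
      al q A p.1 / (qPoch q q p.2 * qPoch A q (2 * p.1 + p.2 + 1))
      = 1 / qPoch (q ^ 2) (q ^ 2) N := by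
  rw [Finset.Nat.sum_antidiagonal_eq_sum_range_succ
    (fun i j => al q A i / (qPoch q q j * qPoch A q (2 * i + j + 1))), ← base_pair hq hA N]
  refine Finset.sum_congr rfl fun r hr => ?_
  have hr' : r ≤ N := by simpa [Nat.lt_succ_iff] using hr
  rw [show 2 * r + (N - r) + 1 = N + r + 1 by omega]

lemma al_summable {q : ℂ} (hq : ‖q‖ < 1) (A : ℂ) : Summable fun r => ‖al q A r‖ := by
  obtain ⟨K1, h1⟩ := qPoch_bdd (norm_sq_lt hq) (A ^ 2)
  obtain ⟨K2, h2⟩ := qPoch_inv_bdd (norm_sq_lt hq) (one_sub_q_ne (norm_sq_lt hq))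
  have hs : Summable fun r : ℕ => ‖(-1 : ℂ) ^ r * q ^ (r + 2 * Nat.choose r 2)‖ := by
    refine Summable.of_nonneg_of_le (fun _ => norm_nonneg _) (fun r => ?_)
      (summable_geometric_of_lt_one (norm_nonneg q) hq)
    simp only [norm_mul, norm_pow, norm_neg, norm_one, one_pow, one_mul]
    exact pow_le_pow_of_le_one (norm_nonneg _) hq.le (by omega)
  have h3 : ∀ r : ℕ, ‖1 - A * q ^ (2 * r)‖ ≤ 1 + ‖A‖ := fun r => by
    refine (norm_sub_le _ _).trans ?_
    rw [norm_one, norm_mul, norm_pow]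
    have := pow_le_one₀ (n := 2 * r) (norm_nonneg q) hq.le
    have := mul_le_mul_of_nonneg_left this (norm_nonneg A)
    linarith
  refine (bdd_mul_summable (bdd_mul_summable (bdd_mul_summable hs h1) h2) h3).congr fun r => ?_
  rw [al, al0, div_eq_mul_inv]

/-- Adding a new largest part. -/
def consE (k : ℕ) : PartK k × ℕ ≃ PartK (k + 1) where
  toFun p := ⟨fun i => Nat.casesOn i (p.1.1 0 + p.2) (fun j => p.1.1 j), by
    constructor
    · refine antitone_nat_of_succ_le fun n => ?_
      cases n with
      | zero => exact Nat.le_add_right _ _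
      | succ n => exact p.1.2.1 (Nat.le_succ n)
    · intro i hi
      cases i with
      | zero => omega
      | succ i => exact p.1.2.2 i (by omega)⟩
  invFun l := (⟨fun i => l.1 (i + 1), fun i j h => l.2.1 (by omega), fun i hi => l.2.2 _ (by omega)⟩,
    l.1 0 - l.1 1)
  left_inv p := by
    refine Prod.ext (Subtype.ext rfl) ?_
    show p.1.1 0 + p.2 - p.1.1 0 = p.2
    omega
  right_inv l := by
    refine Subtype.ext (funext fun i => ?_)
    cases i with
    | zero =>
      show l.1 1 + (l.1 0 - l.1 1) = l.1 0
      have := l.2.1 (Nat.zero_le 1)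
      omega
    | succ i => rfl

/-- Partitions with one part. -/
def oneE : ℕ ≃ PartK 1 where
  toFun n := ⟨fun i => if i = 0 then n else 0, by
    constructor
    · refine antitone_nat_of_succ_le fun n => ?_
      simp
    · intro i hi
      simp; omega⟩
  invFun l := l.1 0
  left_inv n := by simp
  right_inv l := by
    refine Subtype.ext (funext fun i => ?_)
    rcases Nat.eq_zero_or_pos i with rfl | h
    · simp
    · simp [h.ne', l.2.2 i h]

/-- The partition weight. -/
noncomputable def Yt (q z : ℂ) (k : ℕ) (l : PartK k) : ℂ :=
  z ^ wtK k l * q ^ (2 * nK k l) / (qPoch (-q) q (l.1 (k - 1)) * pochK q q k l)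

lemma qPoch_sq (x q : ℂ) (n : ℕ) : qPoch (x ^ 2) (q ^ 2) n = qPoch (-x) q n * qPoch x q n := by
  simp only [qPoch, ← Finset.prod_mul_distrib]
  refine Finset.prod_congr rfl fun i _ => ?_
  ring

lemma Yt_one (q z : ℂ) (n : ℕ) :
    Yt q z 1 (oneE n) = Wt q z 0 0 n / qPoch (q ^ 2) (q ^ 2) n := by
  have h0 : (oneE n).1 0 = n := rfl
  have h1 : (oneE n).1 1 = 0 := rfl
  simp only [Yt, wtK, nK, pochK, Wt, qPoch_zero_left, qPoch_sq, Finset.sum_range_one,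
    Finset.prod_range_one, zero_add, Nat.sub_self, h0, h1, Nat.sub_zero, mul_one]

lemma Yt_cons (q z : ℂ) (k : ℕ) (μ : PartK (k + 1)) (t : ℕ) :
    Yt q z (k + 2) (consE (k + 1) (μ, t))
      = Wt q z 0 0 (μ.1 0 + t) / qPoch q q t * Yt q z (k + 1) μ := by
  have e1 : wtK (k + 2) (consE (k + 1) (μ, t)) = wtK (k + 1) μ + (μ.1 0 + t) := by
    rw [wtK, Finset.sum_range_succ']; rfl
  have e2 : nK (k + 2) (consE (k + 1) (μ, t)) = nK (k + 1) μ + Nat.choose (μ.1 0 + t) 2 := by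
    rw [nK, Finset.sum_range_succ']; rfl
  have e3 : pochK q q (k + 2) (consE (k + 1) (μ, t)) = pochK q q (k + 1) μ * qPoch q q t := by
    rw [pochK, Finset.prod_range_succ']
    have : (consE (k + 1) (μ, t)).1 0 - (consE (k + 1) (μ, t)).1 (0 + 1) = t := by
      show μ.1 0 + t - μ.1 0 = t
      omega
    rw [this]; rfl
  have e4 : (consE (k + 1) (μ, t)).1 (k + 2 - 1) = μ.1 (k + 1 - 1) := rfl
  rw [Yt, e1, e2, e3, e4, Yt, Wt, qPoch_zero_left]
  rw [div_mul_div_comm]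
  congr 1 <;> ring

lemma v_summable {q : ℂ} (hq : ‖q‖ < 1) (hq0 : q ≠ 0) (z : ℂ) :
    Summable fun n => ‖Wt q z 0 0 n‖ := Wt_summable hq hq0 (by simp)

lemma Y_summable {q : ℂ} (hq : ‖q‖ < 1) (hq0 : q ≠ 0) (z : ℂ) (k : ℕ) :
    ∀ c : ℕ → ℂ, (Summable fun n => ‖c n * Wt q z 0 0 n‖) →
      Summable fun l : PartK (k + 1) => ‖c (l.1 0) * Yt q z (k + 1) l‖ := by
  induction k with
  | zero =>
    intro c hc
    rw [← oneE.summable_iff]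
    obtain ⟨K2, h2⟩ := qPoch_inv_bdd (norm_sq_lt hq) (one_sub_q_ne (norm_sq_lt hq))
    refine (bdd_mul_summable hc h2).congr fun n => ?_
    show _ = ‖c n * Yt q z 1 (oneE n)‖
    rw [Yt_one]; congr 1; ring
  | succ k ih =>
    intro c hc
    rw [← (consE (k + 1)).summable_iff]
    obtain ⟨K2, h2⟩ := qPoch_inv_bdd hq (one_sub_q_ne hq)
    have h1 := ih (fun _ => 1) (by simpa using v_summable hq hq0 z)
    simp only [one_mul] at h1
    have h3 := Summable.mul_norm h1 hc
    have hinj : Function.Injective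
        (fun p : PartK (k + 1) × ℕ => ((p.1, p.1.1 0 + p.2) : PartK (k + 1) × ℕ)) := by
      rintro ⟨μ, t⟩ ⟨μ', t'⟩ h
      simp only [Prod.mk.injEq] at h
      obtain ⟨rfl, h⟩ := h
      simp at h
      rw [h]
    have h4 := bdd_mul_summable (h3.comp_injective hinj)
      (g := fun p : PartK (k + 1) × ℕ => (qPoch q q p.2)⁻¹) (fun p => h2 p.2)
    refine h4.congr fun p => ?_
    obtain ⟨μ, t⟩ := p
    show _ = ‖c (μ.1 0 + t) * Yt q z (k + 2) (consE (k + 1) (μ, t))‖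
    rw [Yt_cons]; congr 1; ring

/-- The conjugate Bailey transform. -/
noncomputable def gam (q A : ℂ) (w : ℕ → ℂ) (r : ℕ) : ℂ :=
  ∑' t, w (r + t) / (qPoch q q t * qPoch A q (2 * r + t + 1))

lemma gam_step {q z A : ℂ} (hq : ‖q‖ < 1) (hq0 : q ≠ 0) (hA : ∀ n : ℕ, 1 - A * q ^ n ≠ 0)
    (hz : z = A * q) (w : ℕ → ℂ) (hw : Summable fun n => ‖w n‖) (r : ℕ) :
    gam q A (fun m => (∑' t, w (m + t) / qPoch q q t) * Wt q z 0 0 m) r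
      = gam q A w r * Wt q z 0 0 r := by
  obtain ⟨K1, h1⟩ := qPoch_inv_bdd hq (one_sub_q_ne hq)
  obtain ⟨K2, h2⟩ := qPoch_inv_bdd hq hA
  set f : ℕ × ℕ → ℂ := fun p => w (r + p.1 + p.2) / qPoch q q p.2 *
    (Wt q z 0 0 (r + p.1) / (qPoch q q p.1 * qPoch A q (2 * r + p.1 + 1))) with hf
  have hfs : Summable f := by
    have hinj : Function.Injective (fun p : ℕ × ℕ => ((r + p.1 + p.2, r + p.1) : ℕ × ℕ)) := by
      rintro ⟨s, t⟩ ⟨s', t'⟩ h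
      simp only [Prod.mk.injEq] at h ⊢
      omega
    have h3 := (Summable.mul_norm hw (v_summable hq hq0 z)).comp_injective hinj
    have h4 := bdd_mul_summable (bdd_mul_summable (bdd_mul_summable h3
      (g := fun p : ℕ × ℕ => (qPoch q q p.2)⁻¹) (fun p => h1 p.2))
      (g := fun p : ℕ × ℕ => (qPoch q q p.1)⁻¹) (fun p => h1 p.1))
      (g := fun p : ℕ × ℕ => (qPoch A q (2 * r + p.1 + 1))⁻¹) (fun p => h2 _)
    refine h4.of_norm.congr fun p => ?_
    simp only [hf, div_eq_mul_inv, mul_inv]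
    ring
  have hl : gam q A (fun m => (∑' t, w (m + t) / qPoch q q t) * Wt q z 0 0 m) r
      = ∑' s, ∑' t, f (s, t) := by
    rw [gam]
    refine tsum_congr fun s => ?_
    simp only [hf]
    rw [tsum_mul_right, mul_div_assoc]
  rw [hl, tsum_antidiag hfs, gam, ← tsum_mul_right]
  refine tsum_congr fun N => ?_
  have hC : ∀ n : ℕ, 1 - z * q ^ (2 * r) * q ^ n ≠ 0 := fun n => by
    have := hA (1 + 2 * r + n)
    rw [pow_add, pow_add, pow_one, ← mul_assoc, ← mul_assoc, ← hz] at this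
    exact this
  have hAz : ∀ n, qPoch A q (2 * r + n + 1) = qPoch A q (2 * r + 1) * qPoch (z * q ^ (2 * r)) q n := by
    intro n
    rw [show 2 * r + n + 1 = 2 * r + 1 + n by ring, qPoch_add, hz]
    congr 2; ring
  have hv := vand hq hq0 hC N
  have hA1 := qPoch_ne_zero hA (2 * r + 1)
  have : w (r + N) / (qPoch q q N * qPoch A q (2 * r + N + 1)) * Wt q z 0 0 r
      = w (r + N) * Wt q z 0 0 r / qPoch A q (2 * r + 1) *
        (1 / (qPoch q q N * qPoch (z * q ^ (2 * r)) q N)) := by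
    rw [hAz]; simp only [div_eq_mul_inv, mul_inv]; ring
  rw [this, ← hv, Finset.mul_sum]
  refine Finset.sum_congr rfl fun p hp => ?_
  have hp' : p.1 + p.2 = N := by simpa using hp
  simp only [hf]
  rw [hAz, Wt_add hq0, add_assoc, hp', zero_mul]
  simp only [div_eq_mul_inv, mul_inv]; ring

lemma main_k {q z A : ℂ} (hq : ‖q‖ < 1) (hq0 : q ≠ 0) (hA : ∀ n : ℕ, 1 - A * q ^ n ≠ 0)
    (hz : z = A * q) (k : ℕ) :
    ∀ c : ℕ → ℂ, (Summable fun n => ‖c n * Wt q z 0 0 n‖) →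
      ∑' l : PartK (k + 1), c (l.1 0) * Yt q z (k + 1) l
        = ∑' r, gam q A (fun n => c n * Wt q z 0 0 n) r * (al q A r * Wt q z 0 0 r ^ k) := by
  obtain ⟨K1, h1⟩ := qPoch_inv_bdd hq (one_sub_q_ne hq)
  obtain ⟨K2, h2⟩ := qPoch_inv_bdd hq hA
  induction k with
  | zero =>
    intro c hc
    rw [← oneE.tsum_eq]
    set f : ℕ × ℕ → ℂ := fun p => c (p.1 + p.2) * Wt q z 0 0 (p.1 + p.2) *
      (al q A p.1 / (qPoch q q p.2 * qPoch A q (2 * p.1 + p.2 + 1))) with hf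
    have hfs : Summable f := by
      have hinj : Function.Injective (fun p : ℕ × ℕ => ((p.1 + p.2, p.1) : ℕ × ℕ)) := by
        rintro ⟨s, t⟩ ⟨s', t'⟩ h
        simp only [Prod.mk.injEq] at h ⊢
        omega
      have h3 := (Summable.mul_norm hc (al_summable hq A)).comp_injective hinj
      have h4 := (bdd_mul_summable (bdd_mul_summable h3
        (g := fun p : ℕ × ℕ => (qPoch q q p.2)⁻¹) (fun p => h1 p.2))
        (g := fun p : ℕ × ℕ => (qPoch A q (2 * p.1 + p.2 + 1))⁻¹) (fun p => h2 _))
      refine h4.of_norm.congr fun p => ?_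
      simp only [hf, div_eq_mul_inv, mul_inv]
      ring
    have hr : ∑' r, gam q A (fun n => c n * Wt q z 0 0 n) r * (al q A r * Wt q z 0 0 r ^ 0)
        = ∑' s, ∑' t, f (s, t) := by
      refine tsum_congr fun s => ?_
      rw [gam, ← tsum_mul_right]
      refine tsum_congr fun t => ?_
      simp only [hf, div_eq_mul_inv]
      ring
    rw [hr, tsum_antidiag hfs]
    refine tsum_congr fun N => ?_
    show c N * Yt q z 1 (oneE N) = _
    rw [Yt_one]
    have hb := base_pair' hq hA N
    rw [div_eq_mul_one_div, ← hb, ← mul_assoc, Finset.mul_sum]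
    refine Finset.sum_congr rfl fun p hp => ?_
    have hp' : p.1 + p.2 = N := by simpa using hp
    simp only [hf, hp']
  | succ k ih =>
    intro c hc
    have hs := (consE (k + 1)).summable_iff.2 (Y_summable hq hq0 z (k + 1) c hc).of_norm
    rw [← (consE (k + 1)).tsum_eq]
    refine hs.tsum_prod.trans ?_
    set w : ℕ → ℂ := fun n => c n * Wt q z 0 0 n with hw
    set c' : ℕ → ℂ := fun m => ∑' t, w (m + t) / qPoch q q t with hc'
    have hcb : ∀ m, ‖c' m‖ ≤ (∑' n, ‖w n‖) * K1 := by
      intro m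
      have hwm : Summable fun t => ‖w (m + t)‖ := by
        have : Function.Injective (fun t => m + t) := fun a b h => by simpa using h
        exact hc.comp_injective this
      have hle : ∀ t, ‖w (m + t) / qPoch q q t‖ ≤ ‖w (m + t)‖ * K1 := fun t => by
        rw [div_eq_mul_inv, norm_mul]
        exact mul_le_mul_of_nonneg_left (h1 t) (norm_nonneg _)
      have hK1 : 0 ≤ K1 := (norm_nonneg _).trans (h1 0)
      refine (tsum_of_norm_bounded (hwm.mul_right K1).hasSum hle).trans ?_
      rw [tsum_mul_right]
      refine mul_le_mul_of_nonneg_right ?_ hK1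
      have := hc.sum_add_tsum_nat_add m
      have h0 : 0 ≤ ∑ i ∈ Finset.range m, ‖w i‖ := Finset.sum_nonneg fun _ _ => norm_nonneg _
      simp only [add_comm _ m] at this
      linarith
    have hc's : Summable fun n => ‖c' n * Wt q z 0 0 n‖ := by
      refine (bdd_mul_summable (v_summable hq hq0 z) hcb).congr fun n => ?_
      rw [mul_comm]
    have hi := ih c' hc's
    have hl : ∀ μ : PartK (k + 1), ∑' t, (fun l : PartK (k + 2) => c (l.1 0) * Yt q z (k + 2) l)
        (consE (k + 1) (μ, t)) = c' (μ.1 0) * Yt q z (k + 1) μ := by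
      intro μ
      rw [hc', ← tsum_mul_right]
      refine tsum_congr fun t => ?_
      show c (μ.1 0 + t) * Yt q z (k + 2) (consE (k + 1) (μ, t)) = _
      rw [Yt_cons]
      simp only [hw]; ring
    refine (tsum_congr hl).trans ?_
    rw [hi]
    refine tsum_congr fun r => ?_
    rw [gam_step hq hq0 hA hz w hc r]
    ring

theorem master_identity (k : ℕ) (hk : 1 ≤ k) (q z a b : ℂ) (hq : ‖q‖ < 1) (hq0 : q ≠ 0)
    (habz : ‖a * b * z‖ < 1) (hz : ∀ m : ℤ, -2 ≤ m → z ^ 2 * q ^ m ≠ 1) :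
    ∑' lam : PartK k,
        z ^ wtK k lam * q ^ (2 * nK k lam) *
          qPoch a q⁻¹ (lam.1 0) * qPoch b q⁻¹ (lam.1 0) /
          (qPoch (-q) q (lam.1 (k - 1)) * pochK q q k lam)
      = qPochInf (-z / q) q / qPochInf (a * b * z) q *
          ∑' r : ℕ,
            (-1) ^ r * z ^ (k * r) * q ^ (r + (2 * k + 2) * Nat.choose r 2) *
              qPoch a q⁻¹ r * qPoch b q⁻¹ r *
              qPochInf (a * z * q ^ r) q * qPochInf (b * z * q ^ r) q *
              (1 - z * q ^ (2 * (r : ℤ) - 1)) /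
              (qPoch (q ^ 2) (q ^ 2) r *
                qPochInf (z ^ 2 * q ^ (2 * (r : ℤ) - 2)) (q ^ 2)) := by
  obtain ⟨k, rfl⟩ : ∃ j, k = j + 1 := ⟨k - 1, by omega⟩
  obtain ⟨A, rfl⟩ : ∃ A, z = A * q := ⟨z / q, by field_simp⟩
  have hA2 : ∀ n : ℕ, 1 - A ^ 2 * (q ^ 2) ^ n ≠ 0 := by
    intro n h
    apply hz (2 * n - 2) (by omega)
    rw [zpow_sub₀ hq0, zpow_mul]
    have : (q ^ (2 : ℤ)) ^ (n : ℤ) = (q ^ 2) ^ n := by norm_cast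
    rw [this]
    have : q ^ (2 : ℤ) = q ^ 2 := by norm_cast
    rw [this]
    field_simp
    linear_combination -h
  have hA : ∀ n : ℕ, 1 - A * q ^ n ≠ 0 := by
    intro n h
    apply hA2 n
    have : A ^ 2 * (q ^ 2) ^ n = (A * q ^ n) ^ 2 := by ring
    rw [this, show A * q ^ n = 1 by linear_combination -h]; ring
  have hab : ∀ n : ℕ, 1 - a * b * (A * q) * q ^ n ≠ 0 := by
    intro n h
    have h' := shift_norm hq habz n
    rw [← sub_eq_zero.1 h] at h'
    simp at h'
  have hWW : ∀ n, qPoch a q⁻¹ n * qPoch b q⁻¹ n * Wt q (A * q) 0 0 n = Wt q (A * q) a b n := by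
    intro n; simp only [Wt, qPoch_zero_left]; ring
  have hm := main_k hq hq0 hA rfl k (fun n => qPoch a q⁻¹ n * qPoch b q⁻¹ n)
    (by simp only [hWW]; exact Wt_summable hq hq0 habz)
  simp only [hWW] at hm
  have hl : ∀ lam : PartK (k + 1), (A * q) ^ wtK (k + 1) lam * q ^ (2 * nK (k + 1) lam) *
          qPoch a q⁻¹ (lam.1 0) * qPoch b q⁻¹ (lam.1 0) /
          (qPoch (-q) q (lam.1 (k + 1 - 1)) * pochK q q (k + 1) lam)
      = qPoch a q⁻¹ (lam.1 0) * qPoch b q⁻¹ (lam.1 0) * Yt q (A * q) (k + 1) lam := by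
    intro l; rw [Yt]; ring
  rw [tsum_congr hl, hm, ← tsum_mul_left]
  refine tsum_congr fun r => ?_
  have hgam : gam q A (Wt q (A * q) a b) r * qPochInf A q * qPochInf (a * b * (A * q)) q
      = Wt q (A * q) a b r * (qPochInf (a * (A * q) * q ^ r) q * qPochInf (b * (A * q) * q ^ r) q) := by
    have hC : ∀ n : ℕ, 1 - A * q ^ (2 * r + 1) * q ^ n ≠ 0 := shift_ne hA _
    have hqr : q ^ r * q⁻¹ ^ r = 1 := by rw [← mul_pow, mul_inv_cancel₀ hq0, one_pow]
    have e1 : A * q ^ (2 * r + 1) * (a * q⁻¹ ^ r) = a * (A * q) * q ^ r := by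
      linear_combination a * A * q * q ^ r * hqr
    have e2 : A * q ^ (2 * r + 1) * (b * q⁻¹ ^ r) = b * (A * q) * q ^ r := by
      linear_combination b * A * q * q ^ r * hqr
    have e3 : a * (A * q) * q ^ r * (b * q⁻¹ ^ r) = a * b * (A * q) := by
      linear_combination a * b * A * q * hqr
    have e4 : a * q⁻¹ ^ r * (b * q⁻¹ ^ r) * (A * q ^ (2 * r + 1)) = a * b * (A * q) := by
      rw [← e3, ← e1]; ring
    have hg := gauss_sum (a := a * q⁻¹ ^ r) (b := b * q⁻¹ ^ r) hq hq0 (by rw [e4]; exact habz) hC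
    rw [e1, e2, e3] at hg
    have hA1 := qPoch_ne_zero hA (2 * r + 1)
    have : gam q A (Wt q (A * q) a b) r = Wt q (A * q) a b r / qPoch A q (2 * r + 1) *
        ∑' t, Tt q (A * q ^ (2 * r + 1)) (a * q⁻¹ ^ r) (b * q⁻¹ ^ r) t := by
      rw [gam, ← tsum_mul_left]
      refine tsum_congr fun t => ?_
      rw [Wt_add hq0, show 2 * r + t + 1 = 2 * r + 1 + t by ring, qPoch_add, Tt,
        show A * q * q ^ (2 * r) = A * q ^ (2 * r + 1) by ring]
      simp only [div_eq_mul_inv, mul_inv]; ring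
    rw [this, qPochInf_split hq A (2 * r + 1), ← hg]
    field_simp
  have hsq := qPochInf_sq hq A
  have hI2 := qPochInf_ne_zero (norm_sq_lt hq) hA2
  rw [hsq] at hI2
  have hIA := left_ne_zero_of_mul hI2
  have hIab := qPochInf_ne_zero hq hab
  rw [qPochInf_split (norm_sq_lt hq) (A ^ 2) r] at hsq
  rw [← hsq] at hI2
  have hI3 := right_ne_zero_of_mul hI2
  have h2 := qPoch_ne_zero (one_sub_q_ne (norm_sq_lt hq)) r
  have z1 : -(A * q) / q = -A := by field_simp
  have z2 : A * q * q ^ (2 * (r : ℤ) - 1) = A * q ^ (2 * r) := by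
    rw [zpow_sub₀ hq0, zpow_one]
    have : q ^ (2 * (r : ℤ)) = q ^ (2 * r) := by norm_cast
    rw [this]; field_simp
  have z3 : (A * q) ^ 2 * q ^ (2 * (r : ℤ) - 2) = A ^ 2 * (q ^ 2) ^ r := by
    rw [zpow_sub₀ hq0]
    have : q ^ (2 * (r : ℤ)) = q ^ (2 * r) := by norm_cast
    rw [this]
    have : q ^ (2 : ℤ) = q ^ 2 := by norm_cast
    rw [this, pow_mul]; field_simp
  rw [z1, z2, z3]
  have hgam' := eq_div_of_mul_eq hIA (eq_div_of_mul_eq hIab hgam)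
  rw [hgam', al, al0]
  have hsq' : qPoch (A ^ 2) (q ^ 2) r
      = qPochInf A q * qPochInf (-A) q / qPochInf (A ^ 2 * (q ^ 2) ^ r) (q ^ 2) :=
    eq_div_of_mul_eq hI3 hsq
  rw [hsq']
  simp only [Wt, qPoch_zero_left]
  have ez : (A * q) ^ ((k + 1) * r) * q ^ (r + (2 * (k + 1) + 2) * Nat.choose r 2)
      = ((A * q) ^ r * q ^ (2 * Nat.choose r 2)) * q ^ (r + 2 * Nat.choose r 2)
        * ((A * q) ^ r * q ^ (2 * Nat.choose r 2)) ^ k := by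
    generalize Nat.choose r 2 = c
    rw [mul_pow ((A * q) ^ r), ← pow_mul, ← pow_mul]
    rw [show (k + 1) * r = r + r * k by ring,
      show r + (2 * (k + 1) + 2) * c = 2 * c + (r + 2 * c) + 2 * c * k by ring]
    simp only [pow_add]; ring
  have ez' : (-1 : ℂ) ^ r * (A * q) ^ ((k + 1) * r) * q ^ (r + (2 * (k + 1) + 2) * Nat.choose r 2)
      = (-1) ^ r * (((A * q) ^ r * q ^ (2 * Nat.choose r 2)) * q ^ (r + 2 * Nat.choose r 2)
        * ((A * q) ^ r * q ^ (2 * Nat.choose r 2)) ^ k) := by rw [mul_assoc, ez]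
  rw [ez']
  generalize (A * q) ^ r * q ^ (2 * Nat.choose r 2) = V
  generalize q ^ (r + 2 * Nat.choose r 2) = U
  field_simp
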